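/- Let λ be a real number with λ ≥ (9 + √33)/12. If f is a close-to-convex function on the unit disk with Taylor coefficients a_k, then |λ a_3² − a_5| ≤ 9λ − 5. -/

import Mathlib

open Complex Metric

/-- The k-th Taylor coefficient of `f` at `0`: `a_k = f^{(k)}(0)/k!`. -/
noncomputable def taylorCoeff (f : ℂ → ℂ) (k : ℕ) : ℂ :=
  iteratedDeriv k f 0 / (Nat.factorial k)

/-- `g` is a (normalized) starlike function on the unit disk. -/
def IsStarlikeFn (g : ℂ → ℂ) : Prop :=
  DifferentiableOn ℂ g (ball (0 : ℂ) 1) ∧ g 0 = 0 ∧ deriv g 0 = 1 ∧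
    ∀ z ∈ ball (0 : ℂ) 1 \ {0}, 0 < (z * deriv g z / g z).re

/-- `f` is a (normalized) close-to-convex function on the unit disk. -/
def IsCloseToConvex (f : ℂ → ℂ) : Prop :=
  DifferentiableOn ℂ f (ball (0 : ℂ) 1) ∧ f 0 = 0 ∧ deriv f 0 = 1 ∧
    ∃ θ : ℝ, ∃ g : ℂ → ℂ, IsStarlikeFn g ∧
      ∀ z ∈ ball (0 : ℂ) 1 \ {0},
        0 < (Complex.exp (θ * Complex.I) * z * deriv f z / g z).re

/-!
If `g` is starlike, then `g(z) = z h(z)²` with `Re h ≥ 1/2` (Marx–Strohhäcker, by Jack's lemma), so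
a close-to-convex `f` satisfies `f' = ((1 + c) q - c) h²` with `|c| = 1` and `Re q, Re h ≥ 1/2`. By
the Herglotz–Poisson formula, `q` and each factor `h` are averages of kernels `1 / (1 - x z)`,
`|x| = 1`, so the real part of a linear functional of `f'` is at most its supremum over the products
`(1 + ξ z) / ((1 - x z)(1 - y z)(1 - w z))`. A positive cubature rule of degree four on the triangle
`x y w` reduces the three poles to a single triple one, `(1 + ξ z) / (1 - w z)³` with `|w| ≤ 1`, for
functionals depending only on the coefficients up to `z⁴`. Finally `|λ a₃² - a₅|` is linearized in
`a₃` through `x² = max_t (2 t x - t²)`, and on these kernels the bound is an explicit inequality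
between quadratic forms.
-/

open scoped ComplexConjugate PowerSeries

section TaylorSeries

variable {f p q : ℂ → ℂ} {n : ℕ}

/-- The Taylor series of `f` at `0`, as a formal power series. Its coefficients are junk values
unless `f` is analytic at `0`. -/
noncomputable def taylorSeries (f : ℂ → ℂ) : ℂ⟦X⟧ :=
  .mk (taylorCoeff f)

@[simp]
lemma coeff_taylorSeries : (taylorSeries f).coeff n = taylorCoeff f n :=
  PowerSeries.coeff_mk _ _

@[simp]
lemma taylorCoeff_zero : taylorCoeff f 0 = f 0 := by
  simp [taylorCoeff]

lemma taylorCoeff_congr (h : p =ᶠ[nhds 0] q) : taylorCoeff p n = taylorCoeff q n := by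
  rw [taylorCoeff, taylorCoeff, h.iteratedDeriv_eq]

lemma taylorSeries_congr (h : p =ᶠ[nhds 0] q) : taylorSeries p = taylorSeries q := by
  ext n
  simpa using taylorCoeff_congr h

lemma taylorCoeff_deriv : taylorCoeff (deriv f) n = (n + 1) * taylorCoeff f (n + 1) := by
  rw [taylorCoeff, taylorCoeff, iteratedDeriv_succ', Nat.factorial_succ]
  push_cast
  field_simp

lemma taylorSeries_const_mul_sub_const {c d : ℂ} (hp : AnalyticAt ℂ p 0) :
    taylorSeries (fun z => c * p z - d) = c • taylorSeries p - PowerSeries.C d := by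
  ext n
  simp only [coeff_taylorSeries, map_sub, map_smul, PowerSeries.coeff_C, smul_eq_mul, taylorCoeff]
  rw [iteratedDeriv_fun_sub (contDiffAt_const.mul hp.contDiffAt) contDiffAt_const,
    iteratedDeriv_const_mul_field, iteratedDeriv_const]
  split_ifs with hn <;> simp [hn, mul_div_assoc]

lemma taylorSeries_mul (hp : AnalyticAt ℂ p 0) (hq : AnalyticAt ℂ q 0) :
    taylorSeries (p * q) = taylorSeries p * taylorSeries q := by
  ext n
  simp only [coeff_taylorSeries, PowerSeries.coeff_mul, taylorCoeff,
    Finset.Nat.sum_antidiagonal_eq_sum_range_succ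
      (fun i j => iteratedDeriv i p 0 / i.factorial * (iteratedDeriv j q 0 / j.factorial)),
    iteratedDeriv_mul hp.contDiffAt hq.contDiffAt, Finset.sum_div]
  refine Finset.sum_congr rfl fun i hi => ?_
  rw [Nat.cast_choose ℂ (Finset.mem_range_succ_iff.1 hi)]
  have := n.factorial_ne_zero
  field_simp

end TaylorSeries

section Herglotz

variable {h : ℂ → ℂ} {r : ℝ} {n N : ℕ}

lemma circleAverage_conj_pow_mul (hr : 0 < r) (hh : DifferentiableOn ℂ h (closedBall 0 r)) :
    Real.circleAverage (fun z => conj z ^ n * h z) 0 r = r ^ (2 * n) * taylorCoeff h n := by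
  have conj_eq : ∀ z ∈ sphere (0 : ℂ) r, conj z = r ^ 2 / z := by
    intro z hz
    rw [mem_sphere_zero_iff_norm] at hz
    rw [eq_div_iff (norm_pos_iff.1 (hz ▸ hr)), mul_comm, mul_conj, normSq_eq_norm_sq, hz,
      ofReal_pow]
  have integrand_eq : ∀ z ∈ sphere (0 : ℂ) r, (z - 0)⁻¹ • (conj z ^ n * h z) =
      (r : ℂ) ^ (2 * n) • ((1 / (z - 0) ^ (n + 1)) • h z) := by
    intro z hz
    rw [conj_eq z hz, div_pow, ← pow_mul, sub_zero, smul_eq_mul, smul_eq_mul, smul_eq_mul]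
    have := ne_of_mem_sphere hz hr.ne'
    field_simp
    ring
  rw [Real.circleAverage_eq_circleIntegral hr.ne',
    circleIntegral.integral_congr hr.le integrand_eq, circleIntegral.integral_smul,
    hh.circleIntegral_one_div_sub_center_pow_smul hr, taylorCoeff]
  have := two_pi_I_ne_zero
  simp only [smul_eq_mul]
  field_simp

lemma circleAverage_conj_pow_mul_conj (hr : 0 < r) (hh : DifferentiableOn ℂ h (closedBall 0 r))
    (h0 : h 0 = 0) : Real.circleAverage (fun z => conj z ^ n * conj (h z)) 0 r = 0 := by
  have hd : DiffContOnCl ℂ (fun z => z ^ n * h z) (ball 0 |r|) := by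
    rw [abs_of_pos hr]
    exact DifferentiableOn.diffContOnCl
      (DifferentiableOn.mul (by fun_prop) (hh.mono closure_ball_subset_closedBall))
  have hc : ContinuousOn (fun z => z ^ n * h z) (sphere 0 |r|) := by
    rw [abs_of_pos hr]
    exact ContinuousOn.mul (by fun_prop) (hh.continuousOn.mono sphere_subset_closedBall)
  have comm := conjCLE.toContinuousLinearMap.circleAverage_comp_comm hc.circleIntegrable'
  rw [hd.circleAverage] at comm
  simpa [Function.comp_def, h0] using comm

/-- The normalized class with Carathéodory's half-plane `Re > 0` replaced by `Re ≥ 1 / 2`, whose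
extreme points are the kernels `z ↦ 1 / (1 - x z)`, `‖x‖ = 1`. -/
structure IsHalfPlaneFn (h : ℂ → ℂ) : Prop where
  differentiableOn : DifferentiableOn ℂ h (ball 0 1)
  map_zero : h 0 = 1
  half_le_re : ∀ z ∈ ball (0 : ℂ) 1, 1 / 2 ≤ (h z).re

/-- The Taylor series of `z ↦ 1 / (1 - w z)` at `0`. -/
noncomputable def geomSeries (w : ℂ) : ℂ⟦X⟧ :=
  .mk (w ^ ·)

@[simp]
lemma coeff_geomSeries (w : ℂ) : (geomSeries w).coeff n = w ^ n :=
  PowerSeries.coeff_mk _ _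

lemma one_sub_mul_geomSeries (w : ℂ) :
    (1 - PowerSeries.C w * PowerSeries.X) * geomSeries w = 1 := by
  ext n
  cases n <;>
    simp [geomSeries, sub_mul, mul_assoc, PowerSeries.coeff_succ_X_mul, PowerSeries.coeff_one,
      pow_succ']

namespace IsHalfPlaneFn

lemma ne_zero (hh : IsHalfPlaneFn h) {z : ℂ} (hz : z ∈ ball (0 : ℂ) 1) : h z ≠ 0 := by
  intro h_zero
  have := hh.half_le_re z hz
  norm_num [h_zero] at this

lemma analyticAt_zero (hh : IsHalfPlaneFn h) : AnalyticAt ℂ h 0 :=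
  hh.differentiableOn.analyticAt (ball_mem_nhds _ one_pos)

lemma continuousOn_density (hh : IsHalfPlaneFn h) (hr : 0 < r) (hr1 : r < 1) :
    ContinuousOn (fun z => 2 * (h z).re - 1) (sphere 0 |r|) := by
  have hc : ContinuousOn h (sphere 0 |r|) := by
    rw [abs_of_pos hr]
    exact hh.differentiableOn.continuousOn.mono
      (sphere_subset_closedBall.trans (closedBall_subset_ball hr1))
  exact ((continuous_re.comp_continuousOn hc).const_mul 2).sub continuousOn_const

-- On the circle `2 Re h - 1 = h + conj (h - 1)`, and only `h` correlates with `conj z ^ n`.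
lemma circleAverage_poisson (hh : IsHalfPlaneFn h) (hr : 0 < r) (hr1 : r < 1) :
    Real.circleAverage (fun z => ((2 * (h z).re - 1 : ℝ) : ℂ) * conj z ^ n) 0 r =
      r ^ (2 * n) * taylorCoeff h n := by
  have hd : DifferentiableOn ℂ h (closedBall 0 r) :=
    hh.differentiableOn.mono (closedBall_subset_ball hr1)
  have hc : ContinuousOn h (sphere 0 |r|) := by
    rw [abs_of_pos hr]
    exact hd.continuousOn.mono sphere_subset_closedBall
  have split : (fun z => ((2 * (h z).re - 1 : ℝ) : ℂ) * conj z ^ n) =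
      fun z => conj z ^ n * h z + conj z ^ n * conj (h z - 1) := by
    funext z
    rw [← mul_add, map_sub, map_one, ← add_sub_assoc, add_conj]
    push_cast
    ring
  rw [split, Real.circleAverage_fun_add, circleAverage_conj_pow_mul hr hd,
    circleAverage_conj_pow_mul_conj hr (by fun_prop) (by simp [hh.map_zero]), add_zero]
  all_goals
    refine ContinuousOn.circleIntegrable' ?_
    fun_prop

lemma circleAverage_density (hh : IsHalfPlaneFn h) (hr : 0 < r) (hr1 : r < 1) :
    Real.circleAverage (fun z => 2 * (h z).re - 1) 0 r = 1 := by
  have comm := ofRealCLM.circleAverage_comp_comm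
    (hh.continuousOn_density hr hr1).circleIntegrable'
  have mass := hh.circleAverage_poisson (n := 0) hr hr1
  simp only [Function.comp_def, ofRealCLM_apply] at comm
  simp only [pow_zero, mul_one, mul_zero, taylorCoeff_zero, hh.map_zero, comm] at mass
  exact_mod_cast mass

end IsHalfPlaneFn

section TruncatedFunctional

variable {L : ℂ⟦X⟧ →ₗ[ℂ] ℂ} (hL : ∀ S, PowerSeries.X ^ N ∣ S → L S = 0)
include hL

lemma map_eq_sum_coeff (S : ℂ⟦X⟧) :
    L S = ∑ n ∈ Finset.range N, S.coeff n * L (PowerSeries.X ^ n) := by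
  have tail : L (S - ∑ n ∈ Finset.range N, S.coeff n • PowerSeries.X ^ n) = 0 := by
    refine hL _ (PowerSeries.X_pow_dvd_iff.2 fun m hm => ?_)
    simp [PowerSeries.coeff_X_pow, hm]
  rw [map_sub, sub_eq_zero] at tail
  simpa using tail

lemma continuous_map_geomSeries : Continuous fun w : ℂ => L (geomSeries w) := by
  simp only [fun w : ℂ => map_eq_sum_coeff hL (geomSeries w), coeff_geomSeries]
  fun_prop

lemma continuous_map_rescale (S : ℂ⟦X⟧) :
    Continuous fun r : ℂ => L (PowerSeries.rescale r S) := by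
  have expand (r : ℂ) : L (PowerSeries.rescale r S) =
      ∑ n ∈ Finset.range N, r ^ n * S.coeff n * L (PowerSeries.X ^ n) := by
    rw [map_eq_sum_coeff hL]
    simp only [PowerSeries.coeff_rescale]
  simp only [expand]
  fun_prop

namespace IsHalfPlaneFn

lemma circleAverage_poisson_map (hh : IsHalfPlaneFn h) (hr : 0 < r) (hr1 : r < 1) :
    Real.circleAverage
        (fun z => ((2 * (h z).re - 1 : ℝ) : ℂ) * L (geomSeries (conj z / r))) 0 r =
      L (PowerSeries.rescale (r : ℂ) (taylorSeries h)) := by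
  have density_cont := hh.continuousOn_density hr hr1
  have expand : (fun z => ((2 * (h z).re - 1 : ℝ) : ℂ) * L (geomSeries (conj z / r))) =
      fun z => ∑ n ∈ Finset.range N, (L (PowerSeries.X ^ n) / r ^ n) •
        (((2 * (h z).re - 1 : ℝ) : ℂ) * conj z ^ n) := by
    funext z
    rw [map_eq_sum_coeff hL, Finset.mul_sum]
    refine Finset.sum_congr rfl fun n _ => ?_
    rw [coeff_geomSeries, div_pow, smul_eq_mul]
    ring
  rw [expand, Real.circleAverage_fun_sum, map_eq_sum_coeff hL]
  · refine Finset.sum_congr rfl fun n _ => ?_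
    rw [Real.circleAverage_fun_smul, circleAverage_poisson hh hr hr1, PowerSeries.coeff_rescale,
      coeff_taylorSeries, smul_eq_mul]
    have : (r : ℂ) ≠ 0 := ofReal_ne_zero.2 hr.ne'
    field_simp
    ring
  · intro n _
    refine ContinuousOn.circleIntegrable' ?_
    have := continuous_ofReal.comp_continuousOn density_cont
    fun_prop

lemma re_map_rescale_taylorSeries_le {M : ℝ} (hM : ∀ x, ‖x‖ = 1 → (L (geomSeries x)).re ≤ M)
    (hh : IsHalfPlaneFn h) (hr : 0 < r) (hr1 : r < 1) :
    (L (PowerSeries.rescale (r : ℂ) (taylorSeries h))).re ≤ M := by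
  have density_cont := hh.continuousOn_density hr hr1
  have kernel_cont : Continuous fun z : ℂ => L (geomSeries (conj z / r)) :=
    (continuous_map_geomSeries hL).comp (by fun_prop)
  have integrable : CircleIntegrable
      (fun z => ((2 * (h z).re - 1 : ℝ) : ℂ) * L (geomSeries (conj z / r))) 0 r :=
    ((continuous_ofReal.comp_continuousOn density_cont).mul
      kernel_cont.continuousOn).circleIntegrable'
  calc (L (PowerSeries.rescale (r : ℂ) (taylorSeries h))).re
    _ = Real.circleAverage
          (fun z => (2 * (h z).re - 1) * (L (geomSeries (conj z / r))).re) 0 r := by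
        rw [← hh.circleAverage_poisson_map hL hr hr1, ← reCLM_apply,
          ← reCLM.circleAverage_comp_comm integrable]
        simp only [Function.comp_def, reCLM_apply, re_ofReal_mul]
    _ ≤ Real.circleAverage (fun z => M • (2 * (h z).re - 1)) 0 r := by
        refine Real.circleAverage_mono
          (density_cont.mul (continuous_re.comp kernel_cont).continuousOn).circleIntegrable'
          (density_cont.const_smul M).circleIntegrable' fun z hz => ?_
        rw [abs_of_pos hr, mem_sphere_zero_iff_norm] at hz
        have density_nonneg := hh.half_le_re z (by rwa [mem_ball_zero_iff, hz])
        have kernel_le := hM (conj z / r) (by simp [hz, abs_of_pos hr, hr.ne'])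
        rw [smul_eq_mul, mul_comm M]
        gcongr
        linarith
    _ = M := by
        rw [Real.circleAverage_fun_smul, hh.circleAverage_density hr hr1, smul_eq_mul, mul_one]

lemma re_map_taylorSeries_le {M : ℝ} (hM : ∀ x, ‖x‖ = 1 → (L (geomSeries x)).re ≤ M)
    (hh : IsHalfPlaneFn h) : (L (taylorSeries h)).re ≤ M := by
  have bound_of_lt_one : ∀ r ∈ Set.Ioo (0 : ℝ) 1,
      (L (PowerSeries.rescale (r : ℂ) (taylorSeries h))).re ≤ M := by
    rintro r ⟨hr, hr1⟩
    exact hh.re_map_rescale_taylorSeries_le hL hM hr hr1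
  have hcont : Continuous fun r : ℝ => (L (PowerSeries.rescale (r : ℂ) (taylorSeries h))).re :=
    continuous_re.comp ((continuous_map_rescale hL _).comp continuous_ofReal)
  have one_mem : (1 : ℝ) ∈ closure (Set.Ioo (0 : ℝ) 1) := by
    rw [closure_Ioo zero_ne_one]
    exact Set.right_mem_Icc.2 zero_le_one
  simpa using le_on_closure bound_of_lt_one hcont.continuousOn continuousOn_const one_mem

lemma re_map_mul_taylorSeries_le {M : ℝ} {Q : ℂ⟦X⟧}
    (hM : ∀ x, ‖x‖ = 1 → (L (Q * geomSeries x)).re ≤ M) (hh : IsHalfPlaneFn h) :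
    (L (Q * taylorSeries h)).re ≤ M :=
  re_map_taylorSeries_le (L := L ∘ₗ LinearMap.mulLeft ℂ Q)
    (fun _ hS => hL _ (hS.mul_left Q)) hM hh

end IsHalfPlaneFn

end TruncatedFunctional

end Herglotz

section Jack

open scoped ComplexOrder

variable {F ω : ℂ → ℂ} {z₀ : ℂ} {r : ℝ}

-- The derivative of `‖F‖ ^ 2` at `z₀` is nonpositive along every chord `u z₀ - z₀`, `‖u‖ = 1`; take
-- the rotation `u` that makes `conj (F z₀) * (u z₀ * F' z₀)` nonnegative.
lemma conj_mul_mul_deriv_nonneg_of_isMaxOn (hF : DifferentiableAt ℂ F z₀)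
    (hmax : IsMaxOn (fun z => ‖F z‖) (closedBall 0 ‖z₀‖) z₀) :
    0 ≤ conj (F z₀) * (z₀ * deriv F z₀) := by
  set W := conj (F z₀) * (z₀ * deriv F z₀)
  obtain ⟨u, hu, hW⟩ := exists_norm_eq_mul_self W
  have hmax_sq : IsMaxOn (fun z => ‖F z‖ ^ 2) (closedBall 0 ‖z₀‖) z₀ :=
    isMaxOn_iff.2 fun z hz => pow_le_pow_left₀ (norm_nonneg _) (isMaxOn_iff.1 hmax z hz) 2
  have hsegment : segment ℝ z₀ (u * z₀) ⊆ closedBall 0 ‖z₀‖ :=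
    (convex_closedBall 0 _).segment_subset (by simp) (by simp [hu])
  have chord : 2 • inner ℝ (F z₀) ((u * z₀ - z₀) * deriv F z₀) ≤ 0 :=
    hmax_sq.localize.hasFDerivWithinAt_nonpos
      (hF.hasDerivAt.hasFDerivAt.restrictScalars ℝ).norm_sq.hasFDerivWithinAt
      (sub_mem_posTangentConeAt_of_segment_subset hsegment)
  have rotated : ((u * z₀ - z₀) * deriv F z₀) * conj (F z₀) = ‖W‖ - W := by
    rw [hW]
    ring
  rw [smul_nonpos_iff_nonpos_of_pos_left two_pos, Complex.inner, rotated, sub_re, ofReal_re,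
    sub_nonpos] at chord
  exact re_eq_norm.1 (le_antisymm (re_le_norm W) chord)

lemma eq_mul_dslope_zero (hF0 : F 0 = 0) (z : ℂ) : F z = z * dslope F 0 z := by
  simpa [hF0] using (sub_smul_dslope F 0 z).symm

lemma isMaxOn_norm_dslope (hω : DifferentiableOn ℂ ω (ball 0 ‖z₀‖)) (hω0 : ω 0 = 0) (hz₀ : z₀ ≠ 0)
    (hmax : IsMaxOn (fun z => ‖ω z‖) (closedBall 0 ‖z₀‖) z₀) :
    IsMaxOn (fun z => ‖dslope ω 0 z‖) (closedBall 0 ‖z₀‖) z₀ := by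
  have norm_dslope {z : ℂ} (hz : z ≠ 0) : ‖dslope ω 0 z‖ = ‖ω z‖ / ‖z‖ := by
    rw [dslope_of_ne _ hz, slope_def_field, hω0, sub_zero, sub_zero, norm_div]
  refine isMaxOn_iff.2 fun z hz => ?_
  rw [norm_dslope hz₀]
  rcases (mem_closedBall_zero_iff.1 hz).lt_or_eq with hlt | heq
  · refine norm_dslope_le_div_of_mapsTo_ball hω (fun x hx => ?_) (mem_ball_zero_iff.2 hlt)
    rw [hω0, mem_closedBall_zero_iff]
    exact isMaxOn_iff.1 hmax x (ball_subset_closedBall hx)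
  · rw [norm_dslope (norm_pos_iff.1 (heq ▸ norm_pos_iff.2 hz₀)), heq]
    gcongr
    exact isMaxOn_iff.1 hmax z hz

-- Jack's lemma. Write `ω = z F`; by the Schwarz lemma `‖F‖` is maximal at `z₀` as well, so
-- `z₀ F' / F ≥ 0` there.
lemma exists_one_le_mul_deriv_eq_of_isMaxOn (hω : DifferentiableOn ℂ ω (ball 0 r)) (hω0 : ω 0 = 0)
    (hz₀ : z₀ ∈ ball 0 r) (hmax : IsMaxOn (fun z => ‖ω z‖) (closedBall 0 ‖z₀‖) z₀)
    (hωz₀ : ω z₀ ≠ 0) : ∃ m : ℝ, 1 ≤ m ∧ z₀ * deriv ω z₀ = m * ω z₀ := by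
  have hz₀_ne : z₀ ≠ 0 := by
    rintro rfl
    exact hωz₀ hω0
  set F := dslope ω 0
  have ω_eq : ω = fun z => z * F z := funext (eq_mul_dslope_zero hω0)
  have hF : DifferentiableAt ℂ F z₀ :=
    ((differentiableOn_dslope (ball_mem_nhds 0 (pos_of_mem_ball hz₀))).2 hω).differentiableAt
      (isOpen_ball.mem_nhds hz₀)
  have hFz₀ : F z₀ ≠ 0 := fun h => hωz₀ (by simp [ω_eq, h])
  have hnonneg := conj_mul_mul_deriv_nonneg_of_isMaxOn hF (isMaxOn_norm_dslope
    (hω.mono (ball_subset_ball (mem_ball_zero_iff.1 hz₀).le)) hω0 hz₀_ne hmax)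
  obtain ⟨κ, hκ, hκ_eq⟩ : ∃ κ ≥ (0 : ℝ), (κ : ℂ) = _ := RCLike.nonneg_iff_exists_ofReal.1 hnonneg
  refine ⟨1 + κ / ‖F z₀‖ ^ 2, le_add_of_nonneg_right (by positivity), ?_⟩
  have hderiv : deriv ω z₀ = F z₀ + z₀ * deriv F z₀ := by
    rw [ω_eq, deriv_fun_mul differentiableAt_fun_id hF, deriv_id'', one_mul]
  have conj_ne_zero : conj (F z₀) ≠ 0 := (map_ne_zero _).2 hFz₀
  have norm_sq_eq : (‖F z₀‖ : ℂ) ^ 2 = conj (F z₀) * F z₀ := (conj_mul' _).symm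
  rw [hderiv, ω_eq]
  push_cast
  rw [norm_sq_eq, hκ_eq]
  field_simp

lemma norm_lt_one_of_mul_deriv_ne (hω : DifferentiableOn ℂ ω (ball 0 r)) (hω0 : ω 0 = 0)
    (hne : ∀ z ∈ ball 0 r, 1 ≤ ‖ω z‖ → ∀ m : ℝ, 1 ≤ m → z * deriv ω z ≠ m * ω z) :
    ∀ z ∈ ball 0 r, ‖ω z‖ < 1 := by
  intro z₁ hz₁
  by_contra! hge
  have hsub : closedBall 0 ‖z₁‖ ⊆ ball (0 : ℂ) r :=
    closedBall_subset_ball (mem_ball_zero_iff.1 hz₁)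
  obtain ⟨z₀, hz₀, hmax⟩ := (isCompact_closedBall (0 : ℂ) ‖z₁‖).exists_isMaxOn ⟨0, by simp⟩
    (hω.continuousOn.norm.mono hsub)
  have one_le : 1 ≤ ‖ω z₀‖ := hge.trans (isMaxOn_iff.1 hmax z₁ (by simp))
  obtain ⟨m, hm, heq⟩ := exists_one_le_mul_deriv_eq_of_isMaxOn hω hω0 (hsub hz₀)
    (hmax.on_subset (closedBall_subset_closedBall (mem_closedBall_zero_iff.1 hz₀)))
    (norm_pos_iff.1 (one_pos.trans_le one_le))
  exact hne z₀ (hsub hz₀) one_le m hm heq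

end Jack

section MarxStrohhacker

variable {g h G : ℂ → ℂ} {c w z₀ : ℂ} {r : ℝ} {n : ℕ}

lemma exists_differentiableOn_pow_eq (hG : DifferentiableOn ℂ G (ball c r))
    (hG0 : ∀ z ∈ ball c r, G z ≠ 0) (hn : n ≠ 0) (hw : w ^ n = G c) :
    ∃ h : ℂ → ℂ, DifferentiableOn ℂ h (ball c r) ∧ h c = w ∧ ∀ z ∈ ball c r, h z ^ n = G z := by
  obtain ⟨ℓ, hℓc, hℓ⟩ :=
    ((hG.deriv isOpen_ball).fun_div hG hG0).isExactOn_ball.with_val_at c 0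
  have hℓd : DifferentiableOn ℂ ℓ (ball c r) := fun z hz =>
    (hℓ z hz).differentiableAt.differentiableWithinAt
  have eq_mul_exp : ∀ z ∈ ball c r, G z = G c * exp (ℓ z) := by
    intro z hz
    have hconst := isOpen_ball.is_const_of_deriv_eq_zero (convex_ball c r).isPreconnected
      (hG.fun_mul hℓd.neg.cexp) (fun x hx => ?_) hz (mem_ball_self (pos_of_mem_ball hz))
    · have hz_eq : G z * exp (-ℓ z) = G c := by simpa [hℓc] using hconst
      rw [← hz_eq, mul_assoc, ← exp_add, neg_add_cancel, exp_zero, mul_one]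
    · have hGx := (hG.differentiableAt (isOpen_ball.mem_nhds hx)).hasDerivAt
      refine (hGx.fun_mul (hℓ x hx).neg.cexp).deriv.trans ?_
      have := hG0 x hx
      simp only [Pi.zero_apply, Pi.neg_apply]
      field_simp
      ring
  refine ⟨fun z => w * exp (ℓ z / n), by fun_prop, by simp [hℓc], fun z hz => ?_⟩
  have : (n : ℂ) ≠ 0 := Nat.cast_ne_zero.2 hn
  rw [mul_pow, ← exp_nat_mul, mul_div_cancel₀ _ this, hw, eq_mul_exp z hz]

lemma norm_one_sub_inv_lt_one_iff (hw : w ≠ 0) : ‖1 - w⁻¹‖ < 1 ↔ 1 / 2 < w.re := by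
  have hw' : 0 < ‖w‖ := norm_pos_iff.2 hw
  rw [show 1 - w⁻¹ = (w - 1) / w by field_simp, norm_div, div_lt_one hw',
    ← sq_lt_sq₀ (norm_nonneg _) hw'.le, ← normSq_eq_norm_sq, ← normSq_eq_norm_sq, normSq_apply,
    normSq_apply, sub_re, sub_im, one_re, one_im]
  constructor <;> intro _ <;> linarith

-- Jack's lemma for `ω = 1 - 1 / h`: at a point with `z ω' = m ω` and `m ≥ 1`, one has
-- `z h' / h = m (h - 1)`, while `‖ω‖ ≥ 1` means `Re h ≤ 1 / 2`.
lemma isHalfPlaneFn_of_re_pos (hh : DifferentiableOn ℂ h (ball 0 1)) (h0 : h 0 = 1)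
    (hne : ∀ z ∈ ball (0 : ℂ) 1, h z ≠ 0)
    (hre : ∀ z ∈ ball (0 : ℂ) 1, 0 < (1 + 2 * (z * deriv h z / h z)).re) : IsHalfPlaneFn h := by
  have norm_lt_one : ∀ z ∈ ball (0 : ℂ) 1, ‖1 - (h z)⁻¹‖ < 1 := by
    refine norm_lt_one_of_mul_deriv_ne (ω := fun z => 1 - (h z)⁻¹)
      (DifferentiableOn.const_sub (hh.fun_inv hne) 1) (by simp [h0]) fun z hz hge m hm heq => ?_
    have hhz := hne z hz
    have hderiv : deriv (fun z => 1 - (h z)⁻¹) z = deriv h z / h z ^ 2 := by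
      have := ((hh.differentiableAt (isOpen_ball.mem_nhds hz)).hasDerivAt.fun_inv hhz).const_sub 1
      rw [this.deriv, neg_div, neg_neg]
    have re_le : (h z).re ≤ 1 / 2 :=
      le_of_not_gt fun hlt => hge.not_gt ((norm_one_sub_inv_lt_one_iff hhz).2 hlt)
    have log_deriv_eq : z * deriv h z / h z = (m : ℝ) * (h z - 1) := by
      rw [hderiv] at heq
      field_simp at heq ⊢
      exact heq
    have := hre z hz
    rw [log_deriv_eq] at this
    simp only [add_re, one_re, mul_re, re_ofNat, im_ofNat, ofReal_re, ofReal_im, sub_re, zero_mul,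
      sub_zero] at this
    nlinarith
  exact ⟨hh, h0, fun z hz => ((norm_one_sub_inv_lt_one_iff (hne z hz)).1 (norm_lt_one z hz)).le⟩

namespace IsStarlikeFn

lemma map_ne_zero (hg : IsStarlikeFn g) {z : ℂ} (hz : z ∈ ball (0 : ℂ) 1 \ {0}) : g z ≠ 0 := by
  obtain ⟨-, -, -, hre⟩ := hg
  intro h_zero
  simpa [h_zero] using hre z hz

lemma exists_eq_mul_sq (hg : IsStarlikeFn g) :
    ∃ h, IsHalfPlaneFn h ∧ ∀ z ∈ ball (0 : ℂ) 1, g z = z * h z ^ 2 := by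
  have ⟨hgd, hg0, hg1, hre⟩ := hg
  have dslope_ne : ∀ z ∈ ball (0 : ℂ) 1, dslope g 0 z ≠ 0 := by
    intro z hz
    rcases eq_or_ne z 0 with rfl | hz0
    · simp [hg1]
    · exact right_ne_zero_of_mul (eq_mul_dslope_zero hg0 z ▸ hg.map_ne_zero ⟨hz, hz0⟩)
  obtain ⟨h, hhd, hh0, hsq⟩ := exists_differentiableOn_pow_eq
    ((differentiableOn_dslope (ball_mem_nhds 0 one_pos)).2 hgd) dslope_ne two_ne_zero
    (show 1 ^ 2 = dslope g 0 0 by simp [hg1])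
  have hne : ∀ z ∈ ball (0 : ℂ) 1, h z ≠ 0 := fun z hz h_zero =>
    dslope_ne z hz (by simp [← hsq z hz, h_zero])
  have factor : ∀ z ∈ ball (0 : ℂ) 1, g z = z * h z ^ 2 := fun z hz => by
    rw [eq_mul_dslope_zero hg0, hsq z hz]
  refine ⟨h, isHalfPlaneFn_of_re_pos hhd hh0 hne fun z hz => ?_, factor⟩
  rcases eq_or_ne z 0 with rfl | hz0
  · simp
  have hball := isOpen_ball.mem_nhds hz
  have hderiv : deriv g z = h z ^ 2 + z * (2 * h z * deriv h z) := by
    have hhz := (hhd.differentiableAt hball).hasDerivAt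
    rw [(Filter.eventuallyEq_of_mem hball factor).deriv_eq,
      ((hasDerivAt_id' z).fun_mul (hhz.fun_pow 2)).deriv]
    simp
  have log_deriv_eq : z * deriv g z / g z = 1 + 2 * (z * deriv h z / h z) := by
    have := hne z hz
    rw [hderiv, factor z hz]
    field_simp
  exact log_deriv_eq ▸ hre z ⟨hz, hz0⟩

end IsStarlikeFn

end MarxStrohhacker

section CloseToConvex

variable {f p : ℂ → ℂ} {z₀ : ℂ}

lemma re_pos_of_eventually_re_pos (hf : ∀ᶠ z in nhds z₀, DifferentiableAt ℂ f z)
    (hre : ∀ᶠ z in nhdsWithin z₀ {z₀}ᶜ, 0 < (f z).re) : 0 < (f z₀).re := by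
  by_contra! hle
  have norm_exp_lt : ∀ᶠ z in nhdsWithin z₀ {z₀}ᶜ, ‖exp (-f z)‖ < ‖exp (-f z₀)‖ := by
    filter_upwards [hre] with z hz
    rw [norm_exp, norm_exp, neg_re, neg_re, Real.exp_lt_exp]
    linarith
  have hmax : IsLocalMax (fun z => ‖exp (-f z)‖) z₀ := by
    filter_upwards [eventually_nhdsWithin_iff.1 norm_exp_lt] with z hz
    rcases eq_or_ne z z₀ with rfl | hne
    · exact le_rfl
    · exact (hz hne).le
  have norm_exp_eq : ∀ᶠ z in nhds z₀, ‖exp (-f z)‖ = ‖exp (-f z₀)‖ :=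
    norm_eventually_eq_of_isLocalMax (hf.mono fun z hz => hz.neg.cexp) hmax
  obtain ⟨z, hlt, heq⟩ := (norm_exp_lt.and (norm_exp_eq.filter_mono nhdsWithin_le_nhds)).exists
  exact hlt.ne heq

-- With `c = exp (-2 i θ)`, `1 + c = 2 cos θ exp (-i θ)` turns the half-plane
-- `Re (exp (i θ) p) > 0` into `Re q > 1 / 2`.
lemma exists_isHalfPlaneFn_of_re_exp_mul_pos (hp : DifferentiableOn ℂ p (ball 0 1)) (hp0 : p 0 = 1)
    {θ : ℝ} (hre : ∀ z ∈ ball (0 : ℂ) 1, 0 < (exp (θ * I) * p z).re) :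
    ∃ c q, ‖c‖ = 1 ∧ IsHalfPlaneFn q ∧ ∀ z, p z = (1 + c) * q z - c := by
  have cos_pos : 0 < Real.cos θ := by
    simpa [hp0, exp_ofReal_mul_I_re] using hre 0 (mem_ball_self one_pos)
  set c := exp ((-2 * θ : ℝ) * I)
  have one_add_mul : (1 + c) * exp (θ * I) = (2 * Real.cos θ : ℝ) := by
    rw [add_mul, one_mul, ← exp_add]
    push_cast
    rw [two_cos]
    congr 2
    ring
  have cos_ne : ((2 * Real.cos θ : ℝ) : ℂ) ≠ 0 := ofReal_ne_zero.2 (by positivity)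
  have one_add_ne : 1 + c ≠ 0 := left_ne_zero_of_mul (one_add_mul ▸ cos_ne)
  refine ⟨c, fun z => 1 + (p z - 1) / (1 + c), norm_exp_ofReal_mul_I _,
    ⟨by fun_prop, by simp [hp0], fun z hz => ?_⟩, fun z => by field_simp; ring⟩
  have hre_z := hre z hz
  have div_eq : (p z - 1) / (1 + c) = (exp (θ * I) * p z - exp (θ * I)) / (2 * Real.cos θ : ℝ) := by
    rw [← one_add_mul, ← mul_sub_one, mul_comm (1 + c), mul_div_mul_left _ _ (exp_ne_zero _)]
  rw [div_eq, add_re, one_re, div_ofReal_re, sub_re, exp_ofReal_mul_I_re, sub_div]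
  have : Real.cos θ / (2 * Real.cos θ) = 1 / 2 := by field_simp
  have : 0 < (exp (θ * I) * p z).re / (2 * Real.cos θ) := by positivity
  linarith

lemma IsCloseToConvex.exists_deriv_eq (hf : IsCloseToConvex f) :
    ∃ c q h, ‖c‖ = 1 ∧ IsHalfPlaneFn q ∧ IsHalfPlaneFn h ∧
      ∀ z ∈ ball (0 : ℂ) 1, deriv f z = ((1 + c) * q z - c) * (h z * h z) := by
  obtain ⟨hfd, -, hf1, θ, g, hg, hre⟩ := hf
  obtain ⟨h, hh, g_eq⟩ := hg.exists_eq_mul_sq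
  have hsq_ne : ∀ z ∈ ball (0 : ℂ) 1, h z * h z ≠ 0 := fun z hz =>
    mul_self_ne_zero.2 (hh.ne_zero hz)
  have hpd : DifferentiableOn ℂ (fun z => deriv f z / (h z * h z)) (ball 0 1) :=
    (hfd.deriv isOpen_ball).fun_div (hh.differentiableOn.fun_mul hh.differentiableOn) hsq_ne
  have hre_punctured : ∀ z ∈ ball (0 : ℂ) 1 \ {0},
      0 < (exp (θ * I) * (deriv f z / (h z * h z))).re := by
    rintro z ⟨hz, hz0⟩
    have hz0 : z ≠ 0 := hz0
    have := hh.ne_zero hz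
    convert hre z ⟨hz, hz0⟩ using 2
    rw [g_eq z hz]
    field_simp
  have hre_ball : ∀ z ∈ ball (0 : ℂ) 1, 0 < (exp (θ * I) * (deriv f z / (h z * h z))).re := by
    intro z hz
    rcases eq_or_ne z 0 with rfl | hz0
    · have hball := isOpen_ball.mem_nhds hz
      refine re_pos_of_eventually_re_pos
        (f := fun z => exp (θ * I) * (deriv f z / (h z * h z))) ?_ ?_
      · filter_upwards [hball] with x hx
        exact (hpd.differentiableAt (isOpen_ball.mem_nhds hx)).const_mul _
      · filter_upwards [sdiff_mem_nhdsWithin_compl hball {0}] with x hx using hre_punctured x hx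
    · exact hre_punctured z ⟨hz, hz0⟩
  obtain ⟨c, q, hc, hq, p_eq⟩ :=
    exists_isHalfPlaneFn_of_re_exp_mul_pos hpd (by simp [hf1, hh.map_zero]) hre_ball
  refine ⟨c, q, h, hc, hq, hh, fun z hz => ?_⟩
  rw [← p_eq, div_mul_cancel₀ _ (hsq_ne z hz)]

end CloseToConvex

section Cubature

variable {E : Type*} [AddCommGroup E] [Module ℝ E]

/-- The seven-point cubature rule of degree four for the uniform probability measure on the
triangle with vertices `x`, `y`, `z`: its nodes are three interior points, the centroid and the
midpoints of the sides. -/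
noncomputable def triangleCubature (Φ : ℂ → E) (x y z : ℂ) : E :=
  (81 / 560 : ℝ) • (Φ ((7 * x + y + z) / 9) + Φ ((x + 7 * y + z) / 9) + Φ ((x + y + 7 * z) / 9)) +
    (27 / 80 : ℝ) • Φ ((x + y + z) / 3) +
    (8 / 105 : ℝ) • (Φ ((x + y) / 2) + Φ ((y + z) / 2) + Φ ((z + x) / 2))

lemma coeff_geomSeries_pow_three (w : ℂ) (n : ℕ) :
    (geomSeries w ^ 3).coeff n = (n + 1) * (n + 2) / 2 * w ^ n := by
  have coeff_sq (k : ℕ) : (geomSeries w ^ 2).coeff k = (k + 1) * w ^ k := by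
    rw [pow_two, PowerSeries.coeff_mul, Finset.sum_congr rfl fun ij hij =>
      show _ = w ^ k by
        rw [coeff_geomSeries, coeff_geomSeries, ← pow_add,
          Finset.HasAntidiagonal.mem_antidiagonal.1 hij]]
    simp
  have sum_eq : ∑ k ∈ Finset.range (n + 1), ((k : ℂ) + 1) = (n + 1) * (n + 2) / 2 := by
    induction n with
    | zero => norm_num
    | succ n ih =>
      rw [Finset.sum_range_succ, ih]
      push_cast
      ring
  rw [pow_succ, PowerSeries.coeff_mul, Finset.Nat.sum_antidiagonal_eq_sum_range_succ_mk, ← sum_eq,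
    Finset.sum_mul]
  refine Finset.sum_congr rfl fun k hk => ?_
  rw [coeff_sq, coeff_geomSeries, mul_assoc, ← pow_add,
    Nat.add_sub_of_le (Finset.mem_range_succ_iff.1 hk)]

lemma map_triangleCubature {E' : Type*} [AddCommGroup E'] [Module ℝ E'] (T : E →ₗ[ℝ] E')
    (Φ : ℂ → E) (x y z : ℂ) :
    T (triangleCubature Φ x y z) = triangleCubature (fun w => T (Φ w)) x y z := by
  simp only [triangleCubature, map_add, map_smul]

lemma triangleCubature_le {Φ : ℂ → ℝ} {M : ℝ} {s : Set ℂ} {x y z : ℂ} (hs : Convex ℝ s)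
    (hΦ : ∀ w ∈ s, Φ w ≤ M) (hx : x ∈ s) (hy : y ∈ s) (hz : z ∈ s) :
    triangleCubature Φ x y z ≤ M := by
  have node_le {w : ℂ} (a b c : ℝ) (ha : 0 ≤ a := by norm_num) (hb : 0 ≤ b := by norm_num)
      (hc : 0 ≤ c := by norm_num) (hsum : a + b + c = 1 := by norm_num)
      (hw : w = a * x + b * y + c * z := by push_cast; ring) : Φ w ≤ M := by
    refine hΦ w ?_
    have := hs.sum_mem (t := Finset.univ) (w := ![a, b, c]) (z := ![x, y, z])
      (by simp [Fin.forall_fin_succ, ha, hb, hc]) (by simpa [Fin.sum_univ_succ, ← add_assoc])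
      (by simp [Fin.forall_fin_succ, hx, hy, hz])
    simpa [hw, Fin.sum_univ_succ, ← add_assoc] using this
  have le_near_x : Φ ((7 * x + y + z) / 9) ≤ M := node_le (7 / 9) (1 / 9) (1 / 9)
  have le_near_y : Φ ((x + 7 * y + z) / 9) ≤ M := node_le (1 / 9) (7 / 9) (1 / 9)
  have le_near_z : Φ ((x + y + 7 * z) / 9) ≤ M := node_le (1 / 9) (1 / 9) (7 / 9)
  have le_centroid : Φ ((x + y + z) / 3) ≤ M := node_le (1 / 3) (1 / 3) (1 / 3)
  have le_mid_xy : Φ ((x + y) / 2) ≤ M := node_le (1 / 2) (1 / 2) 0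
  have le_mid_yz : Φ ((y + z) / 2) ≤ M := node_le 0 (1 / 2) (1 / 2)
  have le_mid_zx : Φ ((z + x) / 2) ≤ M := node_le (1 / 2) 0 (1 / 2)
  simp only [triangleCubature, smul_eq_mul]
  linarith

-- `1 / ((1 - x X) (1 - y X) (1 - z X))` is the uniform average of `1 / (1 - w X) ^ 3` over `w` in
-- the triangle `x y z`, and the coefficients of `X ^ n`, `n ≤ 4`, are polynomials of degree `n`.
lemma X_pow_five_dvd_mul_geomSeries_sub_triangleCubature (x y z : ℂ) :
    (PowerSeries.X : ℂ⟦X⟧) ^ 5 ∣ geomSeries x * geomSeries y * geomSeries z -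
      triangleCubature (fun w => geomSeries w ^ 3) x y z := by
  refine PowerSeries.X_pow_dvd_iff.2 fun n hn => ?_
  have coeff_cubature := map_triangleCubature ((PowerSeries.coeff n).restrictScalars ℝ)
    (fun w => geomSeries w ^ 3) x y z
  simp only [LinearMap.restrictScalars_apply, coeff_geomSeries_pow_three] at coeff_cubature
  rw [map_sub, coeff_cubature, sub_eq_zero]
  interval_cases n <;>
  · simp only [triangleCubature, PowerSeries.coeff_mul, coeff_geomSeries, real_smul,
      Finset.Nat.sum_antidiagonal_eq_sum_range_succ_mk, Finset.sum_range_succ,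
      Finset.sum_range_zero]
    push_cast
    ring

end Cubature

section Reduction

variable {f : ℂ → ℂ} {L : ℂ⟦X⟧ →ₗ[ℂ] ℂ} {M : ℝ}

lemma re_map_mul_geomSeries_mul_le (hL : ∀ S, PowerSeries.X ^ 5 ∣ S → L S = 0) {Q : ℂ⟦X⟧}
    (hM : ∀ w, ‖w‖ ≤ 1 → (L (Q * geomSeries w ^ 3)).re ≤ M) {x y z : ℂ} (hx : ‖x‖ ≤ 1)
    (hy : ‖y‖ ≤ 1) (hz : ‖z‖ ≤ 1) :
    (L (Q * (geomSeries x * geomSeries y * geomSeries z))).re ≤ M := by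
  have eq_cubature : L (Q * (geomSeries x * geomSeries y * geomSeries z)) =
      L (Q * triangleCubature (fun w => geomSeries w ^ 3) x y z) := by
    rw [← sub_eq_zero, ← map_sub, ← mul_sub]
    exact hL _ ((X_pow_five_dvd_mul_geomSeries_sub_triangleCubature x y z).mul_left Q)
  have re_eq := map_triangleCubature
    (reLm ∘ₗ (L ∘ₗ LinearMap.mulLeft ℂ Q).restrictScalars ℝ) (fun w => geomSeries w ^ 3) x y z
  rw [eq_cubature]
  refine re_eq.trans_le (triangleCubature_le (convex_closedBall (0 : ℂ) 1) (fun w hw => ?_)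
    (mem_closedBall_zero_iff.2 hx) (mem_closedBall_zero_iff.2 hy) (mem_closedBall_zero_iff.2 hz))
  exact hM w (mem_closedBall_zero_iff.1 hw)

lemma affine_geomSeries (c x : ℂ) :
    (1 + c) • geomSeries x - PowerSeries.C c =
      (1 + PowerSeries.C (c * x) * PowerSeries.X) * geomSeries x := by
  rw [PowerSeries.smul_eq_C_mul, map_add, map_one, map_mul]
  linear_combination PowerSeries.C c * one_sub_mul_geomSeries x

lemma IsHalfPlaneFn.re_map_affine_taylorSeries_mul_le {N : ℕ}
    (hL : ∀ S, PowerSeries.X ^ N ∣ S → L S = 0) {c : ℂ} {Q : ℂ⟦X⟧}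
    (hM : ∀ x, ‖x‖ = 1 →
      (L ((1 + PowerSeries.C (c * x) * PowerSeries.X) * geomSeries x * Q)).re ≤ M)
    {q : ℂ → ℂ} (hq : IsHalfPlaneFn q) :
    (L (((1 + c) • taylorSeries q - PowerSeries.C c) * Q)).re ≤ M := by
  have map_affine (S : ℂ⟦X⟧) : L (((1 + c) • S - PowerSeries.C c) * Q) =
      L ((1 + c) • Q * S) - c * L Q := by
    rw [← smul_eq_mul c, ← map_smul, ← map_sub, PowerSeries.smul_eq_C_mul,
      PowerSeries.smul_eq_C_mul, PowerSeries.smul_eq_C_mul]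
    congr 1
    ring
  rw [map_affine, sub_re, sub_le_iff_le_add]
  refine hq.re_map_mul_taylorSeries_le hL fun x hx => ?_
  rw [← sub_le_iff_le_add, ← sub_re, ← map_affine, affine_geomSeries]
  exact hM x hx

theorem IsCloseToConvex.re_map_taylorSeries_deriv_le (hf : IsCloseToConvex f)
    (hL : ∀ S, PowerSeries.X ^ 5 ∣ S → L S = 0)
    (hM : ∀ ξ w, ‖ξ‖ = 1 → ‖w‖ ≤ 1 →
      (L ((1 + PowerSeries.C ξ * PowerSeries.X) * geomSeries w ^ 3)).re ≤ M) :
    (L (taylorSeries (deriv f))).re ≤ M := by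
  obtain ⟨c, q, h, hc, hq, hh, deriv_eq⟩ := hf.exists_deriv_eq
  have series_eq : taylorSeries (deriv f) =
      ((1 + c) • taylorSeries q - PowerSeries.C c) * (taylorSeries h * taylorSeries h) := by
    have ha := hh.analyticAt_zero
    have haffine : AnalyticAt ℂ (fun z => (1 + c) * q z - c) 0 :=
      (analyticAt_const.fun_mul hq.analyticAt_zero).fun_sub analyticAt_const
    rw [← taylorSeries_const_mul_sub_const hq.analyticAt_zero, ← taylorSeries_mul ha ha,
      ← taylorSeries_mul haffine (ha.mul ha)]
    exact taylorSeries_congr (Filter.eventually_of_mem (ball_mem_nhds 0 one_pos) deriv_eq)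
  rw [series_eq]
  refine hq.re_map_affine_taylorSeries_mul_le hL fun x hx => ?_
  rw [← mul_assoc]
  refine hh.re_map_mul_taylorSeries_le hL fun y hy => ?_
  rw [mul_right_comm]
  refine hh.re_map_mul_taylorSeries_le hL fun z hz => ?_
  have := re_map_mul_geomSeries_mul_le hL
    (fun w hw => hM (c * x) w (by rw [norm_mul, hc, hx, one_mul]) hw) hx.le hy.le hz.le
  simpa only [mul_assoc] using this

end Reduction

section Zalcman

variable {lam : ℝ}

-- Rotate by `ζ ^ 2` to make `λ A ^ 2 - B` nonnegative and take `t = Re (ζ A)`.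
lemma norm_mul_sq_sub_le_of_forall_re_le (hlam : 0 ≤ lam) {A B : ℂ} {M : ℝ}
    (h : ∀ (t : ℝ) (ζ : ℂ), ‖ζ‖ = 1 →
      (2 * lam * t * ζ * A - ζ ^ 2 * B).re ≤ M + lam * t ^ 2) : ‖lam * A ^ 2 - B‖ ≤ M := by
  obtain ⟨u, hu, hu_eq⟩ := exists_norm_eq_mul_self (lam * A ^ 2 - B)
  obtain ⟨ζ, rfl⟩ := IsAlgClosed.exists_pow_nat_eq u two_pos
  have hζ : ‖ζ‖ = 1 := (pow_eq_one_iff_of_nonneg (norm_nonneg ζ) two_ne_zero).1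
    (by rwa [← norm_pow])
  have norm_eq : ‖lam * A ^ 2 - B‖ = (lam * (ζ * A) ^ 2 - ζ ^ 2 * B).re := by
    rw [← ofReal_re ‖lam * A ^ 2 - B‖, hu_eq]
    congr 1
    ring
  have re_sq_le : lam * ((ζ * A) ^ 2).re ≤ lam * (ζ * A).re ^ 2 := by
    rw [pow_two (ζ * A), mul_re, ← pow_two, ← pow_two]
    gcongr
    exact sub_le_self _ (sq_nonneg _)
  have hle := h (ζ * A).re ζ hζ
  rw [show 2 * lam * (ζ * A).re * ζ * A = (2 * lam * (ζ * A).re : ℝ) * (ζ * A) by push_cast; ring,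
    sub_re, re_ofReal_mul] at hle
  rw [norm_eq, sub_re, re_ofReal_mul]
  linarith

-- `(9 + √33) / 12` is the larger root of `(6 λ - 7) (3 λ - 1) = 1`, beyond which
-- `(6 λ - 7) b² + 2 b d + (3 λ - 1) d²` is positive semidefinite.
lemma seven_lt_and_one_le_mul (hlam : (9 + Real.sqrt 33) / 12 ≤ lam) :
    7 < 6 * lam ∧ 1 ≤ (6 * lam - 7) * (3 * lam - 1) := by
  have sqrt_sq : Real.sqrt 33 ^ 2 = 33 := Real.sq_sqrt (by norm_num)
  have five_lt : 5 < Real.sqrt 33 := Real.lt_sqrt_of_sq_lt (by norm_num)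
  constructor <;> nlinarith

lemma mul_re_sq_sub_re_le (hlam : (9 + Real.sqrt 33) / 12 ≤ lam) {u v : ℂ} (hu : ‖u‖ ≤ 1)
    (hv : ‖v‖ ≤ 1) :
    lam * (2 * u - v).re ^ 2 - (3 * u ^ 2 - 2 * (u * v)).re ≤ 9 * lam - 5 := by
  obtain ⟨hlam7, hprod⟩ := seven_lt_and_one_le_mul hlam
  obtain ⟨a, b⟩ := u
  obtain ⟨c, d⟩ := v
  have hab : b ^ 2 ≤ 1 - a ^ 2 := by
    have := pow_le_one₀ (norm_nonneg _) hu (n := 2)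
    rw [← normSq_eq_norm_sq, normSq_mk] at this
    linarith
  have hcd : d ^ 2 ≤ 1 - c ^ 2 := by
    have := pow_le_one₀ (norm_nonneg _) hv (n := 2)
    rw [← normSq_eq_norm_sq, normSq_mk] at this
    linarith
  have cross_le : -2 * (b * d) ≤ (6 * lam - 7) * b ^ 2 + (3 * lam - 1) * d ^ 2 := by
    have : 0 ≤ (6 * lam - 7) * ((6 * lam - 7) * b ^ 2 + (3 * lam - 1) * d ^ 2 + 2 * (b * d)) :=
      calc 0 ≤ ((6 * lam - 7) * b + d) ^ 2 + ((6 * lam - 7) * (3 * lam - 1) - 1) * d ^ 2 :=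
            add_nonneg (sq_nonneg _) (mul_nonneg (sub_nonneg.2 hprod) (sq_nonneg d))
        _ = _ := by ring
    linarith [nonneg_of_mul_nonneg_right this (by linarith)]
  calc lam * (2 * (⟨a, b⟩ : ℂ) - ⟨c, d⟩).re ^ 2 - (3 * ⟨a, b⟩ ^ 2 - 2 * (⟨a, b⟩ * ⟨c, d⟩) : ℂ).re
    _ = lam * (2 * a - c) ^ 2 - 3 * a ^ 2 + 2 * (a * c) + 3 * b ^ 2 + -2 * (b * d) := by
      simp [pow_two]
      ring
    _ ≤ lam * (2 * a - c) ^ 2 - 3 * a ^ 2 + 2 * (a * c) + 3 * b ^ 2 +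
          ((6 * lam - 7) * b ^ 2 + (3 * lam - 1) * d ^ 2) := by gcongr
    _ = lam * (2 * a - c) ^ 2 - 3 * a ^ 2 + 2 * (a * c) + (6 * lam - 4) * b ^ 2 +
          (3 * lam - 1) * d ^ 2 := by ring
    _ ≤ lam * (2 * a - c) ^ 2 - 3 * a ^ 2 + 2 * (a * c) + (6 * lam - 4) * (1 - a ^ 2) +
          (3 * lam - 1) * (1 - c ^ 2) := by
      gcongr <;> linarith
    _ = 9 * lam - 5 - (2 * lam - 1) * (a + c) ^ 2 := by ring
    _ ≤ 9 * lam - 5 := sub_le_self _ (mul_nonneg (by linarith) (sq_nonneg _))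

/-- The functional whose real part, for suitable `t` and `ζ`, is `|λ a₃² - a₅|` linearized in the
coefficients `S₂ = 3 a₃` and `S₄ = 5 a₅` of `S = f'`. -/
noncomputable def linearizedZalcman (lam t : ℝ) (ζ : ℂ) : ℂ⟦X⟧ →ₗ[ℂ] ℂ :=
  (2 * lam * t * ζ / 3) • PowerSeries.coeff 2 - (ζ ^ 2 / 5) • PowerSeries.coeff 4

lemma linearizedZalcman_apply (t : ℝ) (ζ : ℂ) (S : ℂ⟦X⟧) :
    linearizedZalcman lam t ζ S = 2 * lam * t * ζ / 3 * S.coeff 2 - ζ ^ 2 / 5 * S.coeff 4 :=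
  rfl

lemma linearizedZalcman_eq_zero_of_dvd (t : ℝ) (ζ : ℂ) (S : ℂ⟦X⟧) (hS : PowerSeries.X ^ 5 ∣ S) :
    linearizedZalcman lam t ζ S = 0 := by
  rw [linearizedZalcman_apply, PowerSeries.X_pow_dvd_iff.1 hS 2 (by norm_num),
    PowerSeries.X_pow_dvd_iff.1 hS 4 (by norm_num)]
  ring

lemma linearizedZalcman_taylorSeries_deriv (t : ℝ) (ζ : ℂ) (f : ℂ → ℂ) :
    linearizedZalcman lam t ζ (taylorSeries (deriv f)) =
      2 * lam * t * ζ * taylorCoeff f 3 - ζ ^ 2 * taylorCoeff f 5 := by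
  rw [linearizedZalcman_apply, coeff_taylorSeries, coeff_taylorSeries, taylorCoeff_deriv,
    taylorCoeff_deriv]
  push_cast
  ring

lemma linearizedZalcman_kernel (t : ℝ) (ζ ξ w : ℂ) :
    linearizedZalcman lam t ζ ((1 + PowerSeries.C ξ * PowerSeries.X) * geomSeries w ^ 3) =
      2 * lam * t * (2 * (ζ * w ^ 2) - -(ζ * ξ * w)) -
        (3 * (ζ * w ^ 2) ^ 2 - 2 * (ζ * w ^ 2 * -(ζ * ξ * w))) := by
  have coeff_succ (n : ℕ) :
      ((1 + PowerSeries.C ξ * PowerSeries.X) * geomSeries w ^ 3).coeff (n + 1) =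
        (n + 2) * (n + 3) / 2 * w ^ (n + 1) + ξ * ((n + 1) * (n + 2) / 2 * w ^ n) := by
    rw [add_mul, one_mul, mul_assoc, map_add, PowerSeries.coeff_C_mul,
      PowerSeries.coeff_succ_X_mul, coeff_geomSeries_pow_three, coeff_geomSeries_pow_three]
    push_cast
    ring
  rw [linearizedZalcman_apply, coeff_succ 1, coeff_succ 3]
  push_cast
  ring

lemma re_linearizedZalcman_kernel_le (hlam : (9 + Real.sqrt 33) / 12 ≤ lam) (t : ℝ) {ζ ξ w : ℂ}
    (hζ : ‖ζ‖ = 1) (hξ : ‖ξ‖ = 1) (hw : ‖w‖ ≤ 1) :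
    (linearizedZalcman lam t ζ
      ((1 + PowerSeries.C ξ * PowerSeries.X) * geomSeries w ^ 3)).re ≤
      9 * lam - 5 + lam * t ^ 2 := by
  obtain ⟨hlam7, -⟩ := seven_lt_and_one_le_mul hlam
  have hu : ‖ζ * w ^ 2‖ ≤ 1 := by
    rw [norm_mul, norm_pow, hζ, one_mul]
    exact pow_le_one₀ (norm_nonneg w) hw
  have hv : ‖-(ζ * ξ * w)‖ ≤ 1 := by
    rwa [norm_neg, norm_mul, norm_mul, hζ, hξ, one_mul, one_mul]
  have hcore := mul_re_sq_sub_re_le hlam hu hv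
  have hsq : 0 ≤ lam * (t - (2 * (ζ * w ^ 2) - -(ζ * ξ * w)).re) ^ 2 :=
    mul_nonneg (by linarith) (sq_nonneg _)
  rw [linearizedZalcman_kernel, show (2 * lam * t : ℂ) = (2 * lam * t : ℝ) by push_cast; rfl,
    sub_re, re_ofReal_mul]
  linarith

end Zalcman

theorem generalized_zalcman_closeToConvex_n3_large_lambda
    (lam : ℝ) (hlam : (9 + Real.sqrt 33) / 12 ≤ lam)
    (f : ℂ → ℂ) (hf : IsCloseToConvex f) :
    ‖(lam : ℂ) * (taylorCoeff f 3) ^ 2 - taylorCoeff f 5‖ ≤ 9 * lam - 5 := by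
  have lam_nonneg : 0 ≤ lam := le_trans (by positivity) hlam
  refine norm_mul_sq_sub_le_of_forall_re_le lam_nonneg fun t ζ hζ => ?_
  rw [← linearizedZalcman_taylorSeries_deriv]
  exact hf.re_map_taylorSeries_deriv_le (linearizedZalcman_eq_zero_of_dvd t ζ)
    fun ξ w hξ hw => re_linearizedZalcman_kernel_le hlam t hζ hξ hw
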